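/- Let 𝒯 be a finite set of types, τ : 𝒮 → 𝒯, and for each t ∈ 𝒯 let r_t, p_t be nonnegative integers with r_t ≤ p_t. A set S ⊆ 𝒮 satisfies the bounds if r_t ≤ |{s ∈ S : τ(s) = t}| ≤ p_t for every t ∈ 𝒯. Define the dichotomous distributional preference by: S ≿ S' iff S satisfies the bounds or S' does not satisfy the bounds. Then ≿ satisfies the upper-bound property and the maximizer property. -/

import Mathlib

open Finset

variable {α : Type*}

/-- Strict part of a distributional preference. -/
def strictPref (pref : Finset α → Finset α → Prop) (A B : Finset α) : Prop :=
  pref A B ∧ ¬ pref B A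

/-- Indifference part of a distributional preference. -/
def indiffPref (pref : Finset α → Finset α → Prop) (A B : Finset α) : Prop :=
  pref A B ∧ pref B A

/-- Incomparability under a distributional preference. -/
def incomparable (pref : Finset α → Finset α → Prop) (A B : Finset α) : Prop :=
  ¬ pref A B ∧ ¬ pref B A

/-- `NW q S` is the collection of non-wasteful subsets of `S`. -/
def NW (q : ℕ) (S : Finset α) : Set (Finset α) :=
  {T | T ⊆ S ∧ T.card = min q S.card}

/-- The frontier of `S`: non-wasteful subsets undominated w.r.t. the preference. -/
def frontierSet (pref : Finset α → Finset α → Prop) (q : ℕ) (S : Finset α) :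
    Set (Finset α) :=
  {T | T ∈ NW q S ∧ ∀ T' ∈ NW q S, ¬ strictPref pref T' T}

/-- The upper-bound property of a distributional preference. -/
def upperBoundProperty [DecidableEq α] (pref : Finset α → Finset α → Prop) (q : ℕ) : Prop :=
  ∀ S S' : Finset α, S.card = q → S'.card = q → incomparable pref S S' →
    ∃ S'' ∈ NW q (S ∪ S'), strictPref pref S'' S ∨ strictPref pref S'' S'

/-- The maximizer property of a distributional preference. -/
def maximizerProperty [DecidableEq α] (pref : Finset α → Finset α → Prop) (q : ℕ) : Prop :=
  ∀ S S' : Finset α, S ≠ S' → S.card = q → S'.card = q →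
    (∀ S'' ∈ NW q (S ∪ S'), pref S S'' ∧ pref S' S'') →
    ∃ s ∈ S \ S', ∃ s' ∈ S' \ S,
      indiffPref pref (S.erase s ∪ {s'}) S ∧ indiffPref pref (S'.erase s' ∪ {s}) S'

/-- The improvement property of a distributional preference. -/
def improvementProperty [DecidableEq α] (pref : Finset α → Finset α → Prop) (q : ℕ) : Prop :=
  ∀ S S' : Finset α, S.card = q → S'.card = q → ∀ s ∈ S \ S',
    (∀ S'' ∈ NW q (S ∪ S'), s ∉ S'' → strictPref pref S S'') →
    (∀ S'' ∈ NW q (S ∪ S'), s ∈ S'' → pref S S'') →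
    ∃ s' ∈ S' \ S, strictPref pref (S'.erase s' ∪ {s}) S'

/-- A choice rule is non-wasteful. -/
def nonWasteful (q : ℕ) (Ch : Finset α → Finset α) : Prop :=
  ∀ S : Finset α, (Ch S).card = min q S.card

/-- A choice rule promotes the distributional preference. -/
def promotesPref (pref : Finset α → Finset α → Prop) (Ch : Finset α → Finset α) : Prop :=
  ∀ S : Finset α, ∀ S' ⊆ S, S'.card = (Ch S).card → ¬ strictPref pref S' (Ch S)

/-- A choice rule guarantees no justified envy with respect to priority ranking `π`. -/
def noJustifiedEnvy [DecidableEq α] (pref : Finset α → Finset α → Prop)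
    (π : α → α → Prop) (Ch : Finset α → Finset α) : Prop :=
  ∀ S : Finset α, ∀ s ∈ Ch S, ∀ s' ∈ S \ Ch S,
    pref ((Ch S).erase s ∪ {s'}) (Ch S) → π s s'

/-- Path independence of a choice rule. -/
def pathIndependent [DecidableEq α] (Ch : Finset α → Finset α) : Prop :=
  ∀ S S' : Finset α, Ch (S ∪ S') = Ch (Ch S ∪ S')

/-- Consistency of a choice rule. -/
def consistentRule [DecidableEq α] (Ch : Finset α → Finset α) : Prop :=
  ∀ S : Finset α, ∀ s ∈ S, s ∉ Ch S → Ch (S.erase s) = Ch S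

/-- Substitutability of a choice rule. -/
def substitutableRule [DecidableEq α] (Ch : Finset α → Finset α) : Prop :=
  ∀ S : Finset α, ∀ s ∈ S, ∀ s' ∈ S, s ≠ s' → s ∈ Ch S → s ∈ Ch (S.erase s')

/-- `l` lists the elements of `A` in strictly decreasing `π`-priority. -/
def descList [DecidableEq α] (π : α → α → Prop) (A : Finset α) (l : List α) : Prop :=
  l.Pairwise π ∧ l.Nodup ∧ l.toFinset = A

/-- `A` priority dominates `B` with respect to `π`. -/
def priorityDominates [DecidableEq α] (π : α → α → Prop) (A B : Finset α) : Prop :=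
  B.card ≤ A.card ∧
  ∀ la lb : List α, descList π A la → descList π B lb →
    ∀ (k : ℕ) (ha : k < la.length) (hb : k < lb.length),
      la.get ⟨k, ha⟩ = lb.get ⟨k, hb⟩ ∨ π (la.get ⟨k, ha⟩) (lb.get ⟨k, hb⟩)

/-- The revealed preference axiom for a choice rule: no revealed-priority cycles. -/
def revealedPrefAxiom [DecidableEq α] (pref : Finset α → Finset α → Prop)
    (Ch : Finset α → Finset α) : Prop :=
  ¬ ∃ (K : ℕ) (s : ℕ → α) (T : ℕ → Finset α), 0 < K ∧ s K = s 0 ∧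
    ∀ k < K, s k ∈ Ch (T k) ∧ s (k + 1) ∈ T k \ Ch (T k) ∧
      pref ((Ch (T k)).erase (s k) ∪ {s (k + 1)}) (Ch (T k))

/-- `S` satisfies the floors `r` and ceilings `p` for the type map `τ`. -/
def satisfiesBounds {α β : Type*} [DecidableEq β] (τ : α → β) (r p : β → ℕ)
    (S : Finset α) : Prop :=
  ∀ t : β, r t ≤ (S.filter fun s => τ s = t).card ∧
    (S.filter fun s => τ s = t).card ≤ p t

/-- The dichotomous distributional preference: `A ≿ B` iff `A` satisfies the
bounds or `B` does not. -/
def dichotomousPref {α β : Type*} [DecidableEq β] (τ : α → β) (r p : β → ℕ)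
    (A B : Finset α) : Prop :=
  satisfiesBounds τ r p A ∨ ¬ satisfiesBounds τ r p B

lemma aux_count {α β : Type*} [DecidableEq α] [DecidableEq β] (τ : α → β) (S : Finset α)
    (s s' : α) (hs : s ∈ S) (hs' : s' ∉ S) (u : β) :
    ((S.erase s ∪ {s'}).filter fun x => τ x = u).card + (if τ s = u then 1 else 0) =
      (S.filter fun x => τ x = u).card + (if τ s' = u then 1 else 0) := by
  simp only [Finset.card_filter]
  rw [Finset.sum_union (by
    rw [Finset.disjoint_singleton_right]
    exact fun h => hs' (Finset.mem_of_mem_erase h))]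
  rw [Finset.sum_singleton, ← Finset.sum_erase_add S _ hs]
  omega

lemma aux_NW {α : Type*} [DecidableEq α] (q : ℕ) (S T A : Finset α) (hS : S.card = q)
    (s s' : α) (hs : s ∈ S) (hs' : s' ∉ S) (hA : S ∪ T ⊆ A) (ht : s' ∈ T) :
    S.erase s ∪ {s'} ∈ NW q A := by
  refine ⟨?_, ?_⟩
  · intro x hx
    apply hA
    grind
  · have h1 : S.card ≤ A.card := Finset.card_le_card (Finset.subset_union_left.trans hA)
    rw [Finset.card_union_of_disjoint (by
      rw [Finset.disjoint_singleton_right]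
      exact fun h => hs' (Finset.mem_of_mem_erase h)), Finset.card_erase_of_mem hs,
      Finset.card_singleton]
    have := Finset.card_pos.2 ⟨s, hs⟩
    omega

lemma aux_lt {α β : Type*} [DecidableEq α] [DecidableEq β] (τ : α → β) (S T : Finset α)
    (s : α) (hs : s ∈ S) (hs' : s ∉ T) (h : ∀ x ∈ T \ S, τ x ≠ τ s) :
    (T.filter fun x => τ x = τ s).card < (S.filter fun x => τ x = τ s).card := by
  apply Finset.card_lt_card
  rw [Finset.ssubset_iff_of_subset]
  · exact ⟨s, by simp [hs], by simp [hs']⟩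
  · intro x hx
    rw [Finset.mem_filter] at hx ⊢
    refine ⟨?_, hx.2⟩
    by_contra hxS
    exact h x (Finset.mem_sdiff.2 ⟨hx.1, hxS⟩) hx.2

/-- The dichotomous distributional preference satisfies the
upper-bound property and the maximizer property. -/
theorem stmt15 {α β : Type*} [Fintype α] [Nonempty α] [DecidableEq α]
    [Fintype β] [DecidableEq β]
    (q : ℕ) (hq : 0 < q) (τ : α → β) (r p : β → ℕ) (hrp : ∀ t : β, r t ≤ p t) :
    upperBoundProperty (dichotomousPref τ r p) q ∧
    maximizerProperty (dichotomousPref τ r p) q := by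
  refine ⟨?_, ?_⟩
  · intro S S' _ _ h
    simp only [incomparable, dichotomousPref] at h
    tauto
  intro S S' hne hS hS' hmax
  have hd : (S \ S').Nonempty := by
    rw [Finset.sdiff_nonempty]
    exact fun h => hne (Finset.eq_of_subset_of_card_le h (by omega))
  have hd' : (S' \ S).Nonempty := by
    rw [Finset.sdiff_nonempty]
    exact fun h => hne (Finset.eq_of_subset_of_card_le h (by omega)).symm
  by_cases hall : ∃ T ∈ NW q (S ∪ S'), satisfiesBounds τ r p T
  · obtain ⟨T, hT, hTb⟩ := hall
    have hSb : satisfiesBounds τ r p S := by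
      have := (hmax T hT).1
      exact this.resolve_right (not_not_intro hTb)
    have hSb' : satisfiesBounds τ r p S' := by
      have := (hmax T hT).2
      exact this.resolve_right (not_not_intro hTb)
    have key : ∃ s ∈ S \ S', ∃ s' ∈ S' \ S, τ s = τ s' ∨
        ((∀ x ∈ S' \ S, τ x ≠ τ s) ∧ (∀ x ∈ S \ S', τ x ≠ τ s')) := by
      by_cases hc : ∃ s ∈ S \ S', ∃ s' ∈ S' \ S, τ s = τ s'
      · obtain ⟨s, hs, s', hs', h⟩ := hc
        exact ⟨s, hs, s', hs', Or.inl h⟩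
      · push Not at hc
        obtain ⟨s, hs⟩ := hd
        obtain ⟨s', hs'⟩ := hd'
        exact ⟨s, hs, s', hs', Or.inr ⟨fun x hx => (hc s hs x hx).symm,
          fun x hx => hc x hx s' hs'⟩⟩
    obtain ⟨s, hs, s', hs', h⟩ := key
    refine ⟨s, hs, s', hs', ?_⟩
    rw [Finset.mem_sdiff] at hs hs'
    have c1 := aux_count τ S s s' hs.1 hs'.2
    have c2 := aux_count τ S' s' s hs'.1 hs.2
    have b : satisfiesBounds τ r p (S.erase s ∪ {s'}) ∧
        satisfiesBounds τ r p (S'.erase s' ∪ {s}) := by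
      rw [satisfiesBounds, satisfiesBounds, ← forall_and]
      intro u
      have c1 := c1 u
      have c2 := c2 u
      have b1 := hSb u
      have b2 := hSb' u
      rcases h with h | ⟨h1, h2⟩
      · rw [h] at c1 c2
        omega
      · have l1 := aux_lt τ S S' s hs.1 hs.2 h1
        have l2 := aux_lt τ S' S s' hs'.1 hs'.2 h2
        by_cases e1 : τ s = u
        · by_cases e2 : τ s' = u
          · simp only [e1, e2, if_true] at c1 c2
            omega
          · rw [e1] at l1
            simp only [e1, e2, if_true, if_false] at c1 c2
            omega
        · by_cases e2 : τ s' = u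
          · rw [e2] at l2
            simp only [e1, e2, if_true, if_false] at c1 c2
            omega
          · simp only [e1, e2, if_false] at c1 c2
            omega
    exact ⟨⟨Or.inl b.1, Or.inl hSb⟩, ⟨Or.inl b.2, Or.inl hSb'⟩⟩
  · push Not at hall
    obtain ⟨s, hs⟩ := hd
    obtain ⟨s', hs'⟩ := hd'
    refine ⟨s, hs, s', hs', ?_⟩
    rw [Finset.mem_sdiff] at hs hs'
    have n1 := hall _ (aux_NW q S S' (S ∪ S') hS s s' hs.1 hs'.2 subset_rfl hs'.1)
    have n2 := hall _ (aux_NW q S' S (S ∪ S') hS' s' s hs'.1 hs.2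
      (Finset.union_comm S' S).subset hs.1)
    have hle : S.card ≤ (S ∪ S').card := Finset.card_le_card Finset.subset_union_left
    have n3 := hall S ⟨Finset.subset_union_left, by omega⟩
    have n4 := hall S' ⟨Finset.subset_union_right, by omega⟩
    exact ⟨⟨Or.inr n3, Or.inr n1⟩, ⟨Or.inr n4, Or.inr n2⟩⟩
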